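/- arXiv:1909.06648 — 2 statements merged into one kernel-verified Lean document; each statement's English description precedes it below -/
import Mathlib

section
/- Let (a,b) ∈ [0,1]² and let c satisfy 0 ≤ c ≤ min{a,b,1−a,1−b}, and set d₂ = min{a,b} − c. Then 4∫₀¹ C̄^{(a,b)}_c(u,u) du − 1 = 1 − 4(a−d₂)(b−d₂). -/
open Set MeasureTheory intervalIntegral

/-- A bivariate copula: boundary conditions plus the 2-increasing property. -/
def IsCopula (C : ℝ → ℝ → ℝ) : Prop :=
  (∀ u ∈ Set.Icc (0:ℝ) 1, C u 0 = 0 ∧ C 0 u = 0 ∧ C u 1 = u ∧ C 1 u = u) ∧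
  ∀ u₁ u₂ v₁ v₂ : ℝ, 0 ≤ u₁ → u₁ ≤ u₂ → u₂ ≤ 1 → 0 ≤ v₁ → v₁ ≤ v₂ → v₂ ≤ 1 →
    0 ≤ C u₂ v₂ - C u₂ v₁ - C u₁ v₂ + C u₁ v₁

/-- The lower bound function C̲^{(a,b)}_c. -/
noncomputable def lowerC (a b c : ℝ) : ℝ → ℝ → ℝ := fun u v =>
  max (max (u + v - 1) 0)
    (min (min (max (a + b - 1) 0 + c) (u - a + (max (a + b - 1) 0 + c)))
      (min (v - b + (max (a + b - 1) 0 + c)) (u + v - a - b + (max (a + b - 1) 0 + c))))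

/-- The upper bound function C̄^{(a,b)}_c. -/
noncomputable def upperC (a b c : ℝ) : ℝ → ℝ → ℝ := fun u v =>
  min (min u v)
    (max (max (min a b - c) (u - b + (min a b - c)))
      (max (v - a + (min a b - c)) (u + v - a - b + (min a b - c))))

/-- Spearman's rho of a copula. -/
noncomputable def spearmanRho (C : ℝ → ℝ → ℝ) : ℝ :=
  12 * (∫ u in (0:ℝ)..1, ∫ v in (0:ℝ)..1, C u v) - 3

/-- Spearman's footrule of a copula. -/
noncomputable def spearmanFootrule (C : ℝ → ℝ → ℝ) : ℝ :=
  6 * (∫ u in (0:ℝ)..1, C u u) - 2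

/-- Gini's gamma of a copula. -/
noncomputable def giniGamma (C : ℝ → ℝ → ℝ) : ℝ :=
  4 * (∫ u in (0:ℝ)..1, (C u u + C u (1 - u))) - 2

/-- Blomqvist's beta of a copula. -/
noncomputable def blomqvistBeta (C : ℝ → ℝ → ℝ) : ℝ :=
  4 * C (1/2) (1/2) - 1

/-- The integral over the unit interval of the positive part of `u - t`. -/
lemma integral_max_sub_zero {t : ℝ} (h0 : 0 ≤ t) (h1 : t ≤ 1) :
    ∫ u in (0:ℝ)..1, max (u - t) 0 = (1 - t) ^ 2 / 2 := by
  have hint : ∀ x y : ℝ, IntervalIntegrable (fun u : ℝ => max (u - t) 0) volume x y :=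
    fun x y => Continuous.intervalIntegrable (by fun_prop) x y
  rw [← integral_add_adjacent_intervals (hint 0 t) (hint t 1)]
  have left : ∫ u in (0:ℝ)..t, max (u - t) 0 = ∫ _ in (0:ℝ)..t, (0:ℝ) := by
    refine integral_congr fun u hu => ?_
    rw [uIcc_of_le h0] at hu
    exact max_eq_right (by linarith [hu.2])
  have right : ∫ u in t..1, max (u - t) 0 = ∫ u in t..1, (u - t) := by
    refine integral_congr fun u hu => ?_
    rw [uIcc_of_le h1] at hu
    exact max_eq_left (by linarith [hu.1])
  rw [left, right, intervalIntegral.integral_sub (by simp) (by simp)]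
  simp only [intervalIntegral.integral_zero, integral_id, intervalIntegral.integral_const, smul_eq_mul]
  ring

/-- The diagonal section of `upperC` as a combination of positive parts. -/
lemma upperC_diag {a b c : ℝ} (hc0 : 0 ≤ c) (u : ℝ) :
    upperC a b c u u = u - max (u - (min a b - c)) 0 + max (u - a) 0 + max (u - b) 0
      - max (u - (a + b - (min a b - c))) 0 := by
  unfold upperC
  grind

theorem Q_M_upperC (a b c d₂ : ℝ) (ha : a ∈ Set.Icc (0:ℝ) 1) (hb : b ∈ Set.Icc (0:ℝ) 1)
    (hc0 : 0 ≤ c) (hc : c ≤ min (min a b) (min (1 - a) (1 - b)))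
    (hd : d₂ = min a b - c) :
    4 * (∫ u in (0:ℝ)..1, upperC a b c u u) - 1 = 1 - 4 * (a - d₂) * (b - d₂) := by
  obtain ⟨ha0, ha1⟩ := ha
  obtain ⟨hb0, hb1⟩ := hb
  have hd0 : 0 ≤ d₂ := by grind
  have hd1 : d₂ ≤ 1 := by grind
  have he0 : 0 ≤ a + b - d₂ := by grind
  have he1 : a + b - d₂ ≤ 1 := by grind
  have hint : ∀ t : ℝ, IntervalIntegrable (fun u : ℝ => max (u - t) 0) volume 0 1 :=
    fun t => Continuous.intervalIntegrable (by fun_prop) 0 1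
  have hid : IntervalIntegrable (fun u : ℝ => u) volume 0 1 := continuous_id.intervalIntegrable 0 1
  simp only [upperC_diag hc0, ← hd]
  rw [intervalIntegral.integral_sub (((hid.sub (hint _)).add (hint _)).add (hint _)) (hint _),
    intervalIntegral.integral_add ((hid.sub (hint _)).add (hint _)) (hint _),
    intervalIntegral.integral_add (hid.sub (hint _)) (hint _), intervalIntegral.integral_sub hid (hint _), integral_id,
    integral_max_sub_zero hd0 hd1, integral_max_sub_zero ha0 ha1,
    integral_max_sub_zero hb0 hb1, integral_max_sub_zero he0 he1]
  ring
end

section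
/- Let C be a copula with attained asymmetry m. Then φ(C) ≤ 1 − 12m², and moreover φ(C) ≥ −1/2 if 0 ≤ m ≤ 1/4 while φ(C) ≥ 24m² − 12m + 1 if 1/4 ≤ m ≤ 1/3, where φ(C) is Spearman's footrule of C. In particular, if m = 1/3 then φ(C) = −1/3. -/
open Set MeasureTheory intervalIntegral

theorem integral_const_mul_add_const (α β x y : ℝ) :
    ∫ u in x..y, (α * u + β) = α * (y ^ 2 - x ^ 2) / 2 + β * (y - x) := by
  rw [intervalIntegral.integral_add (Continuous.intervalIntegrable (by fun_prop) _ _)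
      intervalIntegrable_const,
    intervalIntegral.integral_const_mul, integral_id, intervalIntegral.integral_const, smul_eq_mul]
  ring

namespace IsCopula

variable {C : ℝ → ℝ → ℝ}

theorem swap (hC : IsCopula C) : IsCopula (fun u v => C v u) := by
  refine ⟨fun u hu => ?_, fun u₁ u₂ v₁ v₂ h₁ h₂ h₃ h₄ h₅ h₆ => ?_⟩
  · obtain ⟨h₁, h₂, h₃, h₄⟩ := hC.1 u hu
    exact ⟨h₂, h₁, h₄, h₃⟩
  · have := hC.2 v₁ v₂ u₁ u₂ h₄ h₅ h₆ h₁ h₂ h₃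
    linarith

theorem mono_left (hC : IsCopula C) {u u' v : ℝ} (hu : 0 ≤ u) (huu' : u ≤ u') (hu' : u' ≤ 1)
    (hv : v ∈ Icc (0 : ℝ) 1) : C u v ≤ C u' v := by
  have h := hC.2 u u' 0 v hu huu' hu' le_rfl hv.1 hv.2
  have h₁ := (hC.1 u ⟨hu, huu'.trans hu'⟩).1
  have h₂ := (hC.1 u' ⟨hu.trans huu', hu'⟩).1
  linarith

theorem mono_right (hC : IsCopula C) {u v v' : ℝ} (hv : 0 ≤ v) (hvv' : v ≤ v') (hv' : v' ≤ 1)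
    (hu : u ∈ Icc (0 : ℝ) 1) : C u v ≤ C u v' :=
  hC.swap.mono_left hv hvv' hv' hu

theorem sub_le_left (hC : IsCopula C) {u u' v : ℝ} (hu : 0 ≤ u) (huu' : u ≤ u') (hu' : u' ≤ 1)
    (hv : v ∈ Icc (0 : ℝ) 1) : C u' v - C u v ≤ u' - u := by
  have h := hC.2 u u' v 1 hu huu' hu' hv.1 hv.2 le_rfl
  have h₁ := (hC.1 u ⟨hu, huu'.trans hu'⟩).2.2.1
  have h₂ := (hC.1 u' ⟨hu.trans huu', hu'⟩).2.2.1
  linarith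

theorem sub_le_right (hC : IsCopula C) {u v v' : ℝ} (hv : 0 ≤ v) (hvv' : v ≤ v') (hv' : v' ≤ 1)
    (hu : u ∈ Icc (0 : ℝ) 1) : C u v' - C u v ≤ v' - v :=
  hC.swap.sub_le_left hv hvv' hv' hu

theorem nonneg (hC : IsCopula C) {u v : ℝ} (hu : u ∈ Icc (0 : ℝ) 1) (hv : v ∈ Icc (0 : ℝ) 1) :
    0 ≤ C u v := by
  have h := hC.mono_left le_rfl hu.1 hu.2 hv
  rwa [(hC.1 v hv).2.1] at h

theorem le_left (hC : IsCopula C) {u v : ℝ} (hu : u ∈ Icc (0 : ℝ) 1) (hv : v ∈ Icc (0 : ℝ) 1) :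
    C u v ≤ u := by
  have h := hC.mono_right hv.1 hv.2 le_rfl hu
  rwa [(hC.1 u hu).2.2.1] at h

theorem add_sub_one_le (hC : IsCopula C) {u v : ℝ} (hu : u ∈ Icc (0 : ℝ) 1)
    (hv : v ∈ Icc (0 : ℝ) 1) : u + v - 1 ≤ C u v := by
  have h := hC.sub_le_left hu.1 hu.2 le_rfl hv
  rw [(hC.1 v hv).2.2.2] at h
  linarith

theorem monotoneOn_diag (hC : IsCopula C) : MonotoneOn (fun u => C u u) (Icc 0 1) :=
  fun _ hu _ hv huv =>
    (hC.mono_left hu.1 huv hv.2 hu).trans (hC.mono_right hu.1 huv hv.2 hv)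

theorem intervalIntegrable_diag (hC : IsCopula C) {x y : ℝ} (hx : x ∈ Icc (0 : ℝ) 1)
    (hy : y ∈ Icc (0 : ℝ) 1) : IntervalIntegrable (fun u => C u u) volume x y :=
  (hC.monotoneOn_diag.mono (uIcc_subset_Icc hx hy)).intervalIntegrable

theorem integral_diag_le (hC : IsCopula C) {x y : ℝ} (α β : ℝ) (hx : 0 ≤ x) (hxy : x ≤ y)
    (hy : y ≤ 1) (h : ∀ u ∈ Icc x y, C u u ≤ α * u + β) :
    ∫ u in x..y, C u u ≤ α * (y ^ 2 - x ^ 2) / 2 + β * (y - x) := by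
  rw [← integral_const_mul_add_const]
  exact intervalIntegral.integral_mono_on hxy
    (hC.intervalIntegrable_diag ⟨hx, hxy.trans hy⟩ ⟨hx.trans hxy, hy⟩)
    (Continuous.intervalIntegrable (by fun_prop) _ _) h

theorem le_integral_diag (hC : IsCopula C) {x y : ℝ} (α β : ℝ) (hx : 0 ≤ x) (hxy : x ≤ y)
    (hy : y ≤ 1) (h : ∀ u ∈ Icc x y, α * u + β ≤ C u u) :
    α * (y ^ 2 - x ^ 2) / 2 + β * (y - x) ≤ ∫ u in x..y, C u u := by
  rw [← integral_const_mul_add_const]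
  exact intervalIntegral.integral_mono_on hxy
    (Continuous.intervalIntegrable (by fun_prop) _ _)
    (hC.intervalIntegrable_diag ⟨hx, hxy.trans hy⟩ ⟨hx.trans hxy, hy⟩) h

/-- Spearman's footrule is at least `-1/2` for every copula. -/
theorem neg_half_le_footrule (hC : IsCopula C) : -(1 / 2) ≤ spearmanFootrule C := by
  have h₁ := hC.le_integral_diag (x := 0) (y := 1 / 2) 0 0 le_rfl (by norm_num) (by norm_num)
    fun u hu => by
      have hu' : u ∈ Icc (0 : ℝ) 1 := ⟨hu.1, by linarith [hu.2]⟩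
      linarith [hC.nonneg hu' hu']
  have h₂ := hC.le_integral_diag (x := 1 / 2) (y := 1) 2 (-1) (by norm_num) (by norm_num) le_rfl
    fun u hu => by
      have hu' : u ∈ Icc (0 : ℝ) 1 := ⟨by linarith [hu.1], hu.2⟩
      linarith [hC.add_sub_one_le hu' hu']
  have h := integral_add_adjacent_intervals
    (hC.intervalIntegrable_diag (x := 0) (y := 1 / 2) (by norm_num) (by norm_num))
    (hC.intervalIntegrable_diag (x := 1 / 2) (y := 1) (by norm_num) (by norm_num))
  unfold spearmanFootrule
  rw [← h]
  linarith

/-- A point `(a, b)` above the diagonal where `C` exceeds its transpose by `m` lies in the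
triangle cut out by `m ≤ a`, `m ≤ b - a` and `b ≤ 1 - m`. -/
theorem asymmetry_le (hC : IsCopula C) {a b m : ℝ} (ha : a ∈ Icc (0 : ℝ) 1)
    (hb : b ∈ Icc (0 : ℝ) 1) (hab : a ≤ b) (hm : C a b - C b a = m) :
    m ≤ a ∧ a + m ≤ b ∧ b + m ≤ 1 := by
  have h₁ := hC.le_left ha hb
  have h₂ := hC.nonneg hb ha
  have h₃ := hC.add_sub_one_le hb ha
  have h₄ := hC.mono_left ha.1 hab hb.2 ha
  have h₅ := hC.sub_le_right ha.1 hab hb.2 ha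
  refine ⟨?_, ?_, ?_⟩ <;> linarith

theorem footrule_le_of_asymmetry (hC : IsCopula C) {a b m : ℝ} (ha : a ∈ Icc (0 : ℝ) 1)
    (hb : b ∈ Icc (0 : ℝ) 1) (hab : a ≤ b) (hm₀ : 0 ≤ m) (hm : C a b - C b a = m) :
    spearmanFootrule C ≤ 1 - 12 * m ^ 2 := by
  obtain ⟨hma, hmab, hmb⟩ := hC.asymmetry_le ha hb hab hm
  have hq : C b a ≤ a - m := by linarith [hC.le_left ha hb]
  have hdiag : ∀ u ∈ Icc (0 : ℝ) 1, C u u ≤ 1 * u + 0 := fun u hu => by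
    linarith [hC.le_left hu hu]
  have h₁ := hC.integral_diag_le (x := 0) (y := a - m) 1 0 le_rfl (by linarith)
    (by linarith [ha.2]) fun u hu => hdiag u ⟨hu.1, by linarith [hu.2, ha.2]⟩
  have h₂ := hC.integral_diag_le (x := a - m) (y := a) 0 (a - m) (by linarith) (by linarith)
    ha.2 fun u hu => by
      have hu' : u ∈ Icc (0 : ℝ) 1 := ⟨by linarith [hu.1], hu.2.trans ha.2⟩
      linarith [hC.mono_right hu'.1 hu.2 ha.2 hu', hC.mono_left hu'.1 (hu.2.trans hab) hb.2 ha]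
  have h₃ := hC.integral_diag_le (x := a) (y := b) 1 (-m) ha.1 hab hb.2 fun u hu => by
      have hu' : u ∈ Icc (0 : ℝ) 1 := ⟨ha.1.trans hu.1, hu.2.trans hb.2⟩
      linarith [hC.sub_le_right ha.1 hu.1 hu'.2 hu', hC.mono_left hu'.1 hu.2 hb.2 ha]
  have h₄ := hC.integral_diag_le (x := b) (y := b + m) 2 (-b - m) hb.1 (by linarith) hmb
    fun u hu => by
      have hu' : u ∈ Icc (0 : ℝ) 1 := ⟨hb.1.trans hu.1, hu.2.trans hmb⟩
      linarith [hC.sub_le_right ha.1 (hab.trans hu.1) hu'.2 hu',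
        hC.sub_le_left hb.1 hu.1 hu'.2 ha]
  have h₅ := hC.integral_diag_le (x := b + m) (y := 1) 1 0 (by linarith [hb.1]) hmb le_rfl
    fun u hu => hdiag u ⟨by linarith [hu.1, hb.1], hu.2⟩
  have h0 : (0 : ℝ) ∈ Icc (0 : ℝ) 1 := by norm_num
  have h1 : (1 : ℝ) ∈ Icc (0 : ℝ) 1 := by norm_num
  have ham : a - m ∈ Icc (0 : ℝ) 1 := ⟨by linarith, by linarith [ha.2]⟩
  have hbm : b + m ∈ Icc (0 : ℝ) 1 := ⟨by linarith [hb.1], hmb⟩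
  have e₁ := integral_add_adjacent_intervals (hC.intervalIntegrable_diag h0 ham)
    (hC.intervalIntegrable_diag ham ha)
  have e₂ := integral_add_adjacent_intervals (hC.intervalIntegrable_diag h0 ha)
    (hC.intervalIntegrable_diag ha hb)
  have e₃ := integral_add_adjacent_intervals (hC.intervalIntegrable_diag h0 hb)
    (hC.intervalIntegrable_diag hb hbm)
  have e₄ := integral_add_adjacent_intervals (hC.intervalIntegrable_diag h0 hbm)
    (hC.intervalIntegrable_diag hbm h1)
  unfold spearmanFootrule
  nlinarith [mul_nonneg hm₀ (sub_nonneg.2 hmab)]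

theorem le_footrule_of_asymmetry (hC : IsCopula C) {a b m : ℝ} (ha : a ∈ Icc (0 : ℝ) 1)
    (hb : b ∈ Icc (0 : ℝ) 1) (hab : a ≤ b) (hm₁ : 1 / 4 ≤ m) (hm₂ : m ≤ 1 / 3)
    (hm : C a b - C b a = m) :
    24 * m ^ 2 - 12 * m + 1 ≤ spearmanFootrule C := by
  obtain ⟨hma, hmab, hmb⟩ := hC.asymmetry_le ha hb hab hm
  have hp : m ≤ C a b := by linarith [hC.nonneg hb ha]
  have h₁ := hC.le_integral_diag (x := 0) (y := 1 - 2 * m) 0 0 le_rfl (by linarith)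
    (by linarith) fun u hu => by
      have hu' : u ∈ Icc (0 : ℝ) 1 := ⟨hu.1, by linarith [hu.2]⟩
      linarith [hC.nonneg hu' hu']
  have h₂ := hC.le_integral_diag (x := 1 - 2 * m) (y := 2 * m) 1 (2 * m - 1) (by linarith)
    (by linarith) (by linarith) fun u hu => by
      have hu' : u ∈ Icc (0 : ℝ) 1 := ⟨by linarith [hu.1], by linarith [hu.2]⟩
      have hau : a ≤ u := by linarith [hu.1]
      rcases le_total u b with hub | hbu
      · linarith [hC.sub_le_right hu'.1 hub hb.2 hu', hC.mono_left ha.1 hau hu'.2 hb]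
      · linarith [hC.mono_right hb.1 hbu hu'.2 hu', hC.mono_left ha.1 hau hu'.2 hb, hu.2]
  have h₃ := hC.le_integral_diag (x := 2 * m) (y := 1) 2 (-1) (by linarith) (by linarith) le_rfl
    fun u hu => by
      have hu' : u ∈ Icc (0 : ℝ) 1 := ⟨by linarith [hu.1], hu.2⟩
      linarith [hC.add_sub_one_le hu' hu']
  have h0 : (0 : ℝ) ∈ Icc (0 : ℝ) 1 := by norm_num
  have h1 : (1 : ℝ) ∈ Icc (0 : ℝ) 1 := by norm_num
  have hx : 1 - 2 * m ∈ Icc (0 : ℝ) 1 := ⟨by linarith, by linarith⟩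
  have hy : 2 * m ∈ Icc (0 : ℝ) 1 := ⟨by linarith, by linarith⟩
  have e₁ := integral_add_adjacent_intervals (hC.intervalIntegrable_diag h0 hx)
    (hC.intervalIntegrable_diag hx hy)
  have e₂ := integral_add_adjacent_intervals (hC.intervalIntegrable_diag h0 hy)
    (hC.intervalIntegrable_diag hy h1)
  unfold spearmanFootrule
  nlinarith

/-- Up to transposition, a given asymmetry is attained above the diagonal with the larger value
there. -/
theorem exists_normalized (hC : IsCopula C) {m : ℝ}
    (h : ∃ a ∈ Icc (0 : ℝ) 1, ∃ b ∈ Icc (0 : ℝ) 1, |C a b - C b a| = m) :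
    ∃ D, IsCopula D ∧ spearmanFootrule D = spearmanFootrule C ∧
      ∃ a ∈ Icc (0 : ℝ) 1, ∃ b ∈ Icc (0 : ℝ) 1, a ≤ b ∧ D a b - D b a = m := by
  obtain ⟨a, ha, b, hb, h⟩ := h
  wlog hab : a ≤ b generalizing a b
  · exact this b hb a ha (by rwa [abs_sub_comm]) (le_of_not_ge hab)
  rcases abs_cases (C a b - C b a) with ⟨h', -⟩ | ⟨h', -⟩
  · exact ⟨C, hC, rfl, a, ha, b, hb, hab, by linarith⟩
  · exact ⟨fun u v => C v u, hC.swap, rfl, a, ha, b, hb, hab, by linarith⟩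

end IsCopula

theorem footrule_vs_asymmetry (C : ℝ → ℝ → ℝ) (m : ℝ) (hC : IsCopula C)
    (hbound : ∀ u ∈ Set.Icc (0:ℝ) 1, ∀ v ∈ Set.Icc (0:ℝ) 1, |C u v - C v u| ≤ m)
    (hattain : ∃ a ∈ Set.Icc (0:ℝ) 1, ∃ b ∈ Set.Icc (0:ℝ) 1, |C a b - C b a| = m) :
    spearmanFootrule C ≤ 1 - 12 * m^2 ∧
    (0 ≤ m → m ≤ 1/4 → -(1/2) ≤ spearmanFootrule C) ∧
    (1/4 ≤ m → m ≤ 1/3 → 24 * m^2 - 12 * m + 1 ≤ spearmanFootrule C) ∧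
    (m = 1/3 → spearmanFootrule C = -(1/3)) := by
  have hm₀ : 0 ≤ m := by
    obtain ⟨a, -, b, -, h⟩ := hattain
    exact h ▸ abs_nonneg _
  obtain ⟨D, hD, hDC, a, ha, b, hb, hab, hm⟩ := hC.exists_normalized hattain
  have hupper := hD.footrule_le_of_asymmetry ha hb hab hm₀ hm
  have hlower := fun h₁ h₂ => hD.le_footrule_of_asymmetry ha hb hab h₁ h₂ hm
  rw [hDC] at hupper hlower
  refine ⟨hupper, fun _ _ => hC.neg_half_le_footrule, hlower, ?_⟩
  rintro rfl
  have := hlower (by norm_num) le_rfl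
  exact le_antisymm (by linarith) (by linarith)
end
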